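/- Let Ω ⊂ B_1 ⊂ ℝ^d be open, 0 ∈ ∂Ω, and φ : B_1 → ℝ continuous satisfying: φ > 0 on Ω and φ ≡ 0 on B_1 \ Ω; φ L-Lipschitz; φ ≥ κ dist(·, B_1 \ Ω) on B_{1/2}; φ subharmonic in the sense of distributions. Then there exist constants A > 0 and δ_0 > 0, depending only on d, L, κ, such that for every δ ∈ (0, δ_0] and every positive harmonic function w : Ω → ℝ, sup_{B_{1/2} ∩ {φ > δ/2}} w ≤ A sup_{B_1 ∩ {φ > δ}} w and inf_{B_{1/2} ∩ {φ > δ/2}} w ≥ A^{-1} inf_{B_1 ∩ {φ > δ}} w. -/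

import Mathlib

open MeasureTheory Metric

/-!
A point `x` with `φ x > 0` has a largest ball inside `Ω`, touching the zero set of `φ` at its
boundary. On a fixed fraction of that ball `φ` is much smaller than `φ x`, so the sub-mean value
inequality produces a nearby point where `φ` is larger by a fixed factor, and the Harnack inequality
in the ball compares `w` at the two points. Iterating, `φ` exceeds `δ` after a bounded number of
steps. A step has length comparable to `δ` only as long as nondegeneracy applies, that is, in the
half ball, which the chain may leave. The iteration is therefore run on `φ` minus a small multiple
of the height above a cap of the half ball in the direction of the starting point. Subtracting a
linear function does not affect the sub-mean value inequality, and a gain in the tilted potential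
keeps the chain so close to the half ball that a ball of radius comparable to `δ` around each of its
points either meets the zero set or contains a ball centred in the half ball, where
nondegeneracy gives `φ > δ`.
-/

section RadialLaplacian

open InnerProductSpace
open scoped Laplacian

variable {E : Type*} [NormedAddCommGroup E] [InnerProductSpace ℝ E]

lemma hasFDerivAt_comp_mul_norm_sub_sq {f : ℝ → ℝ} {f' : ℝ} (c : ℝ) (x y : E)
    (hf : HasDerivAt f f' (c * ‖y - x‖ ^ 2)) :
    HasFDerivAt (fun y ↦ f (c * ‖y - x‖ ^ 2)) ((2 * c * f') • innerSL ℝ (y - x)) y := by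
  have hsq : HasFDerivAt (fun y ↦ c * ‖y - x‖ ^ 2) _ y :=
    (((hasFDerivAt_id y).sub_const x).norm_sq).const_mul c
  refine (hf.comp_hasFDerivAt y hsq).congr_fderiv ?_
  ext v
  simp only [id_eq, ContinuousLinearMap.comp_id, smul_apply, innerSL_apply_apply, smul_eq_mul,
    nsmul_eq_mul, Nat.cast_ofNat]
  ring

variable [FiniteDimensional ℝ E]

lemma laplacian_eq_sum_fderiv_fderiv {ι : Type*} [Fintype ι] (b : OrthonormalBasis ι ℝ E)
    {f : E → ℝ} (hf : ContDiff ℝ 2 f) (x : E) :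
    Δ f x = ∑ i, fderiv ℝ (fun y ↦ fderiv ℝ f y (b i)) x (b i) := by
  have hf' : DifferentiableAt ℝ (fderiv ℝ f) x :=
    (hf.fderiv_right (m := 1) le_rfl).differentiable one_ne_zero x
  simp only [laplacian_eq_iteratedFDeriv_orthonormalBasis f b, iteratedFDeriv_two_apply,
    Matrix.cons_val_zero, Matrix.cons_val_one,
    fderiv_clm_apply hf' (differentiableAt_const _), fderiv_fun_const, Pi.zero_apply,
    ContinuousLinearMap.comp_zero, zero_add, ContinuousLinearMap.flip_apply]

lemma laplacian_comp_mul_norm_sub_sq {f : ℝ → ℝ} (hf : ContDiff ℝ 2 f) (c : ℝ) (x y : E) :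
    Δ (fun y ↦ f (c * ‖y - x‖ ^ 2)) y =
      4 * c ^ 2 * ‖y - x‖ ^ 2 * deriv (deriv f) (c * ‖y - x‖ ^ 2)
        + 2 * c * Module.finrank ℝ E * deriv f (c * ‖y - x‖ ^ 2) := by
  have hf₁ (t : ℝ) : HasDerivAt f (deriv f t) t := (hf.differentiable two_ne_zero t).hasDerivAt
  have hf₂ (t : ℝ) : HasDerivAt (deriv f) (deriv (deriv f) t) t :=
    (((contDiff_succ_iff_deriv (n := 1)).1 hf).2.2.differentiable one_ne_zero t).hasDerivAt
  have hcomp : ContDiff ℝ 2 fun y ↦ f (c * ‖y - x‖ ^ 2) :=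
    hf.comp (contDiff_const.mul ((contDiff_id.sub contDiff_const).norm_sq ℝ))
  have first (y v : E) : fderiv ℝ (fun y ↦ f (c * ‖y - x‖ ^ 2)) y v =
      2 * c * deriv f (c * ‖y - x‖ ^ 2) * inner ℝ (y - x) v := by
    rw [(hasFDerivAt_comp_mul_norm_sub_sq c x y (hf₁ _)).fderiv, smul_apply, innerSL_apply_apply,
      smul_eq_mul]
  have second (v : E) : fderiv ℝ (fun y ↦ fderiv ℝ (fun y ↦ f (c * ‖y - x‖ ^ 2)) y v) y v =
      4 * c ^ 2 * deriv (deriv f) (c * ‖y - x‖ ^ 2) * inner ℝ (y - x) v ^ 2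
        + 2 * c * deriv f (c * ‖y - x‖ ^ 2) * ‖v‖ ^ 2 := by
    have hprod : HasFDerivAt
        (fun y ↦ 2 * c * deriv f (c * ‖y - x‖ ^ 2) * inner ℝ (y - x) v) _ y :=
      ((hasFDerivAt_comp_mul_norm_sub_sq c x y (hf₂ _)).const_mul (2 * c)).mul
        (((hasFDerivAt_id y).sub_const x).inner ℝ (hasFDerivAt_const v y))
    simp only [first, hprod.fderiv]
    simp [-map_sub]
    ring
  let b := stdOrthonormalBasis ℝ E
  rw [laplacian_eq_sum_fderiv_fderiv b hcomp]
  simp only [second, b.norm_eq_one, Finset.sum_add_distrib, ← Finset.mul_sum, b.sum_sq_inner_left,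
    Finset.sum_const, Finset.card_univ, Fintype.card_fin, nsmul_eq_mul]
  ring

end RadialLaplacian

section ParametricIntegral

variable {X : Type*} [TopologicalSpace X] [MeasurableSpace X] [OpensMeasurableSpace X]
  [T2Space X]
  {μ : Measure X} [IsFiniteMeasureOnCompacts μ]

lemma hasDerivAt_integral_of_continuous_of_isCompact {F F' : ℝ → X → ℝ} {K : Set X} {U : Set ℝ}
    {t : ℝ} (hK : IsCompact K) (hU : IsOpen U) (ht : t ∈ U) (hF : ∀ s, Continuous (F s))
    (hF' : Continuous fun p : ℝ × X ↦ F' p.1 p.2)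
    (hderiv : ∀ s ∈ U, ∀ y, HasDerivAt (F · y) (F' s y) s)
    (hsupp : ∀ s ∈ U, ∀ y ∉ K, F s y = 0) :
    HasDerivAt (fun s ↦ ∫ y, F s y ∂μ) (∫ y, F' t y ∂μ) t := by
  obtain ⟨V, hV, hVt, hVU⟩ := exists_compact_subset hU ht
  obtain ⟨M, hM⟩ := (hV.prod hK).exists_bound_of_continuousOn hF'.continuousOn
  have hF'supp (s) (hs : s ∈ U) (y) (hy : y ∉ K) : F' s y = 0 :=
    (hderiv s hs y).unique <| (hasDerivAt_const s 0).congr_of_eventuallyEq <|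
      Filter.eventually_of_mem (hU.mem_nhds hs) fun r hr ↦ hsupp r hr y hy
  refine (hasDerivAt_integral_of_dominated_loc_of_deriv_le (F' := F')
    (bound := K.indicator fun _ ↦ M) (mem_interior_iff_mem_nhds.1 hVt) ?_ ?_ ?_ ?_ ?_ ?_).2
  · exact .of_forall fun s ↦ (hF s).aestronglyMeasurable
  · exact (hF t).integrable_of_hasCompactSupport (.intro hK (hsupp t ht))
  · exact (hF'.comp (.prodMk_right t)).aestronglyMeasurable
  · refine .of_forall fun y s hs ↦ ?_
    by_cases hy : y ∈ K
    · simpa [hy] using hM (s, y) ⟨hs, hy⟩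
    · simp [hy, hF'supp s (hVU hs) y hy]
  · exact (integrable_indicator_iff hK.measurableSet).2 (integrableOn_const hK.measure_lt_top.ne)
  · exact .of_forall fun y s hs ↦ hderiv s (hVU hs) y

end ParametricIntegral

section Submean

open InnerProductSpace Module Set
open scoped Laplacian ContDiff

/-- `k` is the profile of a smooth nonnegative radial kernel `y ↦ k (‖y‖ ^ 2)` supported in the
closed unit ball; such kernels are the weights of the sub-mean value inequality. -/
structure IsKernelProfile (k : ℝ → ℝ) : Prop where
  contDiff : ContDiff ℝ ∞ k
  nonneg (τ : ℝ) : 0 ≤ k τ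
  eq_zero {τ : ℝ} : 1 ≤ τ → k τ = 0

lemma isKernelProfile_expNegInvGlue : IsKernelProfile fun τ ↦ expNegInvGlue (1 - τ) where
  contDiff := expNegInvGlue.contDiff.comp (contDiff_const.sub contDiff_id)
  nonneg τ := expNegInvGlue.nonneg (1 - τ)
  eq_zero h := expNegInvGlue.zero_of_nonpos (sub_nonpos.2 h)

lemma IsKernelProfile.exists_primitive {k : ℝ → ℝ} (hk : IsKernelProfile k) :
    ∃ Φ : ℝ → ℝ, IsKernelProfile Φ ∧ deriv Φ = -k := by
  have hcont := hk.contDiff.continuous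
  have hΦ (τ : ℝ) : HasDerivAt (fun τ ↦ ∫ t in τ..1, k t) (-k τ) τ :=
    intervalIntegral.integral_hasDerivAt_left (hcont.intervalIntegrable _ _)
      hcont.aestronglyMeasurable.stronglyMeasurableAtFilter hcont.continuousAt
  have hderiv : deriv (fun τ ↦ ∫ t in τ..1, k t) = -k := funext fun τ ↦ (hΦ τ).deriv
  have hzero {τ : ℝ} (hτ : 1 ≤ τ) : ∫ t in τ..1, k t = 0 :=
    intervalIntegral.integral_zero_ae <| .of_forall fun t ht ↦
      hk.eq_zero (uIoc_of_ge hτ ▸ ht).1.le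
  refine ⟨fun τ ↦ ∫ t in τ..1, k t, ⟨?_, fun τ ↦ ?_, hzero⟩, hderiv⟩
  · exact contDiff_infty_iff_deriv.2
      ⟨fun τ ↦ (hΦ τ).differentiableAt, hderiv ▸ hk.contDiff.neg⟩
  · rcases le_total τ 1 with hτ | hτ
    · exact intervalIntegral.integral_nonneg hτ fun t _ ↦ hk.nonneg t
    · exact (hzero hτ).ge

variable {E : Type*} [NormedAddCommGroup E] [InnerProductSpace ℝ E] [FiniteDimensional ℝ E]
  [MeasurableSpace E] [BorelSpace E]

/-- `φ` is subharmonic on `U` in the sense of distributions. -/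
def IsWeaklySubharmonicOn (φ : E → ℝ) (U : Set E) : Prop :=
  ∀ ψ : E → ℝ, ContDiff ℝ ∞ ψ → HasCompactSupport ψ → tsupport ψ ⊆ U → (∀ x, 0 ≤ ψ x) →
    0 ≤ ∫ x in U, φ x * Δ ψ x

variable {k : ℝ → ℝ} {φ : E → ℝ} {x : E} {s : ℝ}

-- Balls are parametrised by their inverse radius `s`, so that rescaling `k` needs no division.
lemma integral_kernel_comp_inv_smul (φ : E → ℝ) (x : E) (hs : 0 < s) :
    ∫ y, k (‖y‖ ^ 2) * φ (x + s⁻¹ • y) =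
      ∫ y, s ^ finrank ℝ E * k (s ^ 2 * ‖y - x‖ ^ 2) * φ y := by
  have hscale := Measure.integral_comp_smul_of_nonneg (volume : Measure E)
    (fun z ↦ k (‖z‖ ^ 2) * φ (x + s⁻¹ • z)) s (hR := hs.le)
  rw [eq_inv_smul_iff₀ (pow_ne_zero _ hs.ne')] at hscale
  rw [← hscale, smul_eq_mul, ← integral_const_mul, ← integral_sub_right_eq_self _ x]
  refine integral_congr_ae (.of_forall fun y ↦ ?_)
  simp only [norm_smul, Real.norm_of_nonneg hs.le, inv_smul_smul₀ hs.ne', add_sub_cancel, mul_pow,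
    mul_assoc]

lemma IsKernelProfile.hasDerivAt_integral (hk : IsKernelProfile k) (hφ : Continuous φ) (x : E)
    (hs : 0 < s) :
    HasDerivAt (fun s ↦ ∫ y, s ^ finrank ℝ E * k (s ^ 2 * ‖y - x‖ ^ 2) * φ y)
      (∫ y, (finrank ℝ E * s ^ (finrank ℝ E - 1) * k (s ^ 2 * ‖y - x‖ ^ 2)
        + s ^ finrank ℝ E * (deriv k (s ^ 2 * ‖y - x‖ ^ 2) * (2 * s * ‖y - x‖ ^ 2))) * φ y) s := by
  have hk₀ := hk.contDiff.continuous
  have hk₁ : Continuous (deriv k) := hk.contDiff.continuous_deriv (by simp)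
  refine hasDerivAt_integral_of_continuous_of_isCompact (U := Ioi (s / 2))
    (F := fun s y ↦ s ^ finrank ℝ E * k (s ^ 2 * ‖y - x‖ ^ 2) * φ y)
    (F' := fun s y ↦ (finrank ℝ E * s ^ (finrank ℝ E - 1) * k (s ^ 2 * ‖y - x‖ ^ 2)
        + s ^ finrank ℝ E * (deriv k (s ^ 2 * ‖y - x‖ ^ 2) * (2 * s * ‖y - x‖ ^ 2))) * φ y)
    (isCompact_closedBall x (2 / s)) isOpen_Ioi (half_lt_self hs) (by fun_prop) (by fun_prop)
    (fun r _ y ↦ ?_) fun r hr y hy ↦ ?_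
  · have hsq : HasDerivAt (fun r ↦ r ^ 2 * ‖y - x‖ ^ 2) (2 * r * ‖y - x‖ ^ 2) r := by
      simpa using (hasDerivAt_pow 2 r).mul_const (‖y - x‖ ^ 2)
    have hkr := (hk.contDiff.differentiable (by simp) (r ^ 2 * ‖y - x‖ ^ 2)).hasDerivAt.comp r hsq
    exact ((hasDerivAt_pow _ r).mul hkr).mul_const (φ y)
  · have hy' : 2 / s < ‖y - x‖ := by simpa [dist_eq_norm] using hy
    have hr' : s / 2 < r := hr
    have hr₀ : 0 < r := (half_pos hs).trans hr'
    have hry : 1 ≤ r * ‖y - x‖ := by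
      calc (1 : ℝ) = s / 2 * (2 / s) := by field_simp
        _ ≤ r * ‖y - x‖ := by gcongr
    rw [hk.eq_zero (by rw [← mul_pow]; exact one_le_pow₀ hry), mul_zero, zero_mul]

lemma integral_mul_laplacian_comp_nonneg (hk : IsKernelProfile k) {U : Set E}
    (hφ : IsWeaklySubharmonicOn φ U) (hs : 0 < s) (hx : closedBall x s⁻¹ ⊆ U) :
    0 ≤ ∫ y, φ y * Δ (fun y ↦ k (s ^ 2 * ‖y - x‖ ^ 2)) y := by
  have hsupp : tsupport (fun y ↦ k (s ^ 2 * ‖y - x‖ ^ 2)) ⊆ closedBall x s⁻¹ := by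
    refine closure_minimal (fun y hy ↦ ?_) isClosed_closedBall
    contrapose! hy
    have hy' : s⁻¹ < ‖y - x‖ := by simpa [dist_eq_norm] using hy
    have hsy : 1 ≤ s * ‖y - x‖ := ((inv_lt_iff_one_lt_mul₀' hs).1 hy').le
    exact Function.notMem_support.2 (hk.eq_zero (by rw [← mul_pow]; exact one_le_pow₀ hsy))
  have hsmooth : ContDiff ℝ ∞ fun y ↦ k (s ^ 2 * ‖y - x‖ ^ 2) :=
    hk.contDiff.comp (contDiff_const.mul ((contDiff_id.sub contDiff_const).norm_sq ℝ))
  rw [← setIntegral_eq_integral_of_forall_compl_eq_zero (s := U) fun y hy ↦ ?_]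
  · exact hφ _ hsmooth ((isCompact_closedBall x s⁻¹).of_isClosed_subset (isClosed_tsupport _) hsupp)
      (hsupp.trans hx) fun y ↦ hk.nonneg _
  · have hzero := notMem_tsupport_iff_eventuallyEq.1 fun h ↦ hy (hx (hsupp h))
    rw [(laplacian_congr_nhds hzero).eq_of_nhds]
    simp [Pi.zero_def]

-- The `s`-derivative of the rescaled kernel is a negative multiple of the Laplacian of the kernel
-- whose profile is the primitive of `-k`.
lemma IsKernelProfile.antitoneOn_integral (hk : IsKernelProfile k) {U : Set E}
    (hφ : Continuous φ) (hsub : IsWeaklySubharmonicOn φ U) (hs : 0 < s)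
    (hx : closedBall x s⁻¹ ⊆ U) :
    AntitoneOn (fun s ↦ ∫ y, s ^ finrank ℝ E * k (s ^ 2 * ‖y - x‖ ^ 2) * φ y) (Ici s) := by
  obtain ⟨Φ, hΦ, hderiv⟩ := hk.exists_primitive
  have hJ (t : ℝ) (ht : t ∈ Ici s) := hk.hasDerivAt_integral hφ x (hs.trans_le ht)
  refine antitoneOn_of_deriv_nonpos (convex_Ici s)
    (fun t ht ↦ (hJ t ht).continuousAt.continuousWithinAt)
    (fun t ht ↦ (hJ t (interior_subset ht)).differentiableAt.differentiableWithinAt) fun t ht ↦ ?_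
  have hst : s ≤ t := interior_subset ht
  have ht₀ : 0 < t := hs.trans_le hst
  have hxt : closedBall x t⁻¹ ⊆ U := (closedBall_subset_closedBall (by gcongr)).trans hx
  have hpow : (finrank ℝ E : ℝ) * t ^ (finrank ℝ E - 1) = finrank ℝ E * t ^ finrank ℝ E / t := by
    rcases Nat.eq_zero_or_pos (finrank ℝ E) with h | h
    · simp [h]
    · rw [mul_div_assoc, ← pow_sub_one_mul h.ne', mul_div_cancel_right₀ _ ht₀.ne']
  have hΔ (y : E) := laplacian_comp_mul_norm_sub_sq
    (hΦ.contDiff.of_le (WithTop.coe_le_coe.2 le_top)) (t ^ 2) x y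
  rw [(hJ t hst).deriv]
  calc _ = ∫ y, -(t ^ finrank ℝ E / (2 * t ^ 3)) *
          (φ y * Δ (fun y ↦ Φ (t ^ 2 * ‖y - x‖ ^ 2)) y) := by
        congr 1 with y
        rw [hΔ, hderiv, hpow, deriv.neg, Pi.neg_apply]
        field_simp
        ring
    _ ≤ 0 := by
        rw [integral_const_mul]
        exact mul_nonpos_of_nonpos_of_nonneg (neg_nonpos.2 (by positivity))
          (integral_mul_laplacian_comp_nonneg hΦ hsub ht₀ hxt)

lemma IsKernelProfile.continuous_integral (hk : IsKernelProfile k) (hφ : Continuous φ) (x : E) :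
    Continuous fun s : ℝ ↦ ∫ y, k (‖y‖ ^ 2) * φ (x + s • y) := by
  have hk₀ := hk.contDiff.continuous
  have hball := continuous_parametric_integral_of_continuous (μ := (volume : Measure E))
    (f := fun (s : ℝ) y ↦ k (‖y‖ ^ 2) * φ (x + s • y)) (by fun_prop) (isCompact_closedBall 0 1)
  refine hball.congr fun s ↦ setIntegral_eq_integral_of_forall_compl_eq_zero fun y hy ↦ ?_
  have hy' : 1 < ‖y‖ := by simpa using hy
  rw [hk.eq_zero (one_le_pow₀ hy'.le), zero_mul]

theorem IsKernelProfile.integral_mul_le (hk : IsKernelProfile k) {U : Set E} (hφ : Continuous φ)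
    (hsub : IsWeaklySubharmonicOn φ U) (hs : 0 < s) (hx : closedBall x s ⊆ U) :
    (∫ y : E, k (‖y‖ ^ 2)) * φ x ≤ ∫ y, k (‖y‖ ^ 2) * φ (x + s • y) := by
  have hlim := (hk.continuous_integral hφ x).continuousWithinAt (s := Ioi 0) (x := 0)
  have hmono {r : ℝ} (hr : 0 < r) (hrs : r ≤ s) :
      ∫ y, k (‖y‖ ^ 2) * φ (x + r • y) ≤ ∫ y, k (‖y‖ ^ 2) * φ (x + s • y) := by
    have h := hk.antitoneOn_integral hφ hsub (inv_pos.2 hs) ((inv_inv s).symm ▸ hx) self_mem_Ici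
      (inv_anti₀ hr hrs) (inv_anti₀ hr hrs)
    simpa only [← integral_kernel_comp_inv_smul φ x (inv_pos.2 hr),
      ← integral_kernel_comp_inv_smul φ x (inv_pos.2 hs), inv_inv] using h
  have hle := le_of_tendsto hlim <| Filter.eventually_of_mem (Ioc_mem_nhdsGT hs)
    fun r hr ↦ hmono hr.1 hr.2
  simpa only [zero_smul, add_zero, integral_mul_const] using hle

end Submean

section Growth

open Module Set
open scoped NNReal

variable {E : Type*} [NormedAddCommGroup E]

lemma add_smul_mem_closedBall [NormedSpace ℝ E] {x y : E} {s : ℝ} (hs : 0 ≤ s)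
    (hy : y ∈ closedBall 0 1) : x + s • y ∈ closedBall x s := by
  have hy' : ‖y‖ ≤ 1 := by simpa using hy
  simpa [norm_smul, abs_of_nonneg hs] using mul_le_of_le_one_right hs hy'

lemma exists_closedBall_forall_dist_add_smul_le [NormedSpace ℝ E] {x z : E} {r θ : ℝ}
    (hθ : 0 ≤ θ) (hθ₂ : θ ≤ 1 / 2) (hr : 0 < r) (hz : dist z x = r) :
    ∃ b : E, closedBall b θ ⊆ closedBall 0 (1 - θ) ∧
      ∀ y ∈ closedBall b θ, dist (x + ((1 - θ) * r) • y) z ≤ 4 * θ * r := by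
  let n := r⁻¹ • (z - x)
  have hn : ‖n‖ = 1 := by
    rw [norm_smul, ← dist_eq_norm, hz, norm_inv, Real.norm_of_nonneg hr.le,
      inv_mul_cancel₀ hr.ne']
  refine ⟨(1 - 2 * θ) • n, closedBall_subset_closedBall' ?_, fun y hy ↦ ?_⟩
  · rw [dist_zero_right, norm_smul, hn, Real.norm_of_nonneg (by linarith)]
    linarith
  · have hy' : ‖y - (1 - 2 * θ) • n‖ ≤ θ := by simpa [dist_eq_norm] using hy
    have hsplit : x + ((1 - θ) * r) • y - z =
        ((1 - θ) * r) • (y - (1 - 2 * θ) • n) - ((3 - 2 * θ) * θ * r) • n := by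
      have hzn : z = x + r • n := by simp [n, smul_inv_smul₀ hr.ne']
      rw [hzn]
      module
    calc dist (x + ((1 - θ) * r) • y) z
        ≤ (1 - θ) * r * ‖y - (1 - 2 * θ) • n‖ + (3 - 2 * θ) * θ * r * ‖n‖ := by
          rw [dist_eq_norm, hsplit]
          refine (norm_sub_le _ _).trans_eq ?_
          rw [norm_smul, norm_smul, Real.norm_of_nonneg (mul_nonneg (by linarith) hr.le),
            Real.norm_of_nonneg (mul_nonneg (mul_nonneg (by linarith) hθ) hr.le)]
      _ ≤ (1 - θ) * r * θ + (3 - 2 * θ) * θ * r * 1 := by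
          gcongr
          · exact mul_nonneg (by linarith) hr.le
          · exact mul_nonneg (mul_nonneg (by linarith) hθ) hr.le
          · exact hn.le
      _ ≤ 4 * θ * r := by nlinarith [mul_nonneg (mul_nonneg hθ hθ) hr.le]

/-- The weight of the sub-mean value inequality: smooth, even, and positive exactly on the open
unit ball. It is not normalised. -/
noncomputable def bumpKernel (y : E) : ℝ := expNegInvGlue (1 - ‖y‖ ^ 2)

lemma bumpKernel_nonneg (y : E) : 0 ≤ bumpKernel y := expNegInvGlue.nonneg _

lemma bumpKernel_eq_zero {y : E} (hy : 1 ≤ ‖y‖) : bumpKernel y = 0 :=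
  isKernelProfile_expNegInvGlue.eq_zero (one_le_pow₀ hy)

lemma continuous_bumpKernel : Continuous (bumpKernel : E → ℝ) :=
  isKernelProfile_expNegInvGlue.contDiff.continuous.comp
    (by fun_prop : Continuous fun y : E ↦ ‖y‖ ^ 2)

variable [InnerProductSpace ℝ E] [FiniteDimensional ℝ E] [MeasurableSpace E] [BorelSpace E]

lemma integrable_bumpKernel_mul {f : E → ℝ} (hf : Continuous f) :
    Integrable fun y ↦ bumpKernel y * f y := by
  refine (continuous_bumpKernel.mul hf).integrable_of_hasCompactSupport <|
    .intro (isCompact_closedBall 0 1) fun y hy ↦ ?_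
  simp [bumpKernel_eq_zero (by simpa using hy : 1 < ‖y‖).le]

lemma integrable_bumpKernel : Integrable (bumpKernel : E → ℝ) := by
  simpa using integrable_bumpKernel_mul (E := E) (continuous_const (y := (1 : ℝ)))

lemma integral_bumpKernel_pos : 0 < ∫ y : E, bumpKernel y := by
  refine continuous_bumpKernel.integral_pos_of_hasCompactSupport_nonneg_nonzero
    (x := 0) ?_ bumpKernel_nonneg ?_
  · exact .intro (isCompact_closedBall 0 1) fun y hy ↦
      bumpKernel_eq_zero (by simpa using hy : 1 < ‖y‖).le
  · simp [bumpKernel]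

lemma integral_bumpKernel_mul_inner (a : E) : ∫ y, bumpKernel y * inner ℝ a y = 0 := by
  have h := integral_neg_eq_self (fun y : E ↦ bumpKernel y * inner ℝ a y) volume
  simp only [bumpKernel, norm_neg, inner_neg_right, mul_neg, integral_neg] at h ⊢
  linarith

/-- `g` satisfies the sub-mean value inequality with weight `bumpKernel` on the closed balls
contained in `U`. -/
def SubMeanOn (g : E → ℝ) (U : Set E) : Prop :=
  ∀ ⦃x : E⦄ ⦃s : ℝ⦄, 0 < s → closedBall x s ⊆ U →
    (∫ y : E, bumpKernel y) * g x ≤ ∫ y, bumpKernel y * g (x + s • y)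

variable {g : E → ℝ} {U : Set E} {x z : E} {r s : ℝ}

lemma IsWeaklySubharmonicOn.subMeanOn (hg : Continuous g) (h : IsWeaklySubharmonicOn g U) :
    SubMeanOn g U :=
  fun _ _ hs hx ↦ isKernelProfile_expNegInvGlue.integral_mul_le hg h hs hx

lemma SubMeanOn.sub_inner (hg : Continuous g) (h : SubMeanOn g U) (a : E) :
    SubMeanOn (fun y ↦ g y - inner ℝ a y) U := by
  intro x s hs hx
  have hsplit (y : E) : bumpKernel y * (g (x + s • y) - inner ℝ a (x + s • y)) =
      bumpKernel y * g (x + s • y) - bumpKernel y * inner ℝ a x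
        - s * (bumpKernel y * inner ℝ a y) := by
    rw [inner_add_right, inner_smul_right]
    ring
  have hint₁ : Integrable fun y ↦ bumpKernel y * g (x + s • y) :=
    integrable_bumpKernel_mul (by fun_prop)
  have hint₂ : Integrable fun y : E ↦ bumpKernel y * inner ℝ a x :=
    integrable_bumpKernel_mul continuous_const
  have hint₃ : Integrable fun y ↦ bumpKernel y * inner ℝ a y :=
    integrable_bumpKernel_mul (by fun_prop)
  have hint₁₂ : Integrable fun y ↦
      bumpKernel y * g (x + s • y) - bumpKernel y * inner ℝ a x := hint₁.sub hint₂
  simp only [hsplit]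
  rw [integral_sub hint₁₂ (hint₃.const_mul s), integral_sub hint₁ hint₂,
    integral_const_mul, integral_bumpKernel_mul_inner, integral_mul_const, mul_zero, sub_zero,
    mul_sub]
  exact sub_le_sub_right (h hs hx) _

lemma SubMeanOn.exists_add_le (hg : Continuous g) (h : SubMeanOn g U) (hs : 0 < s)
    (hx : closedBall x s ⊆ U) {B : Set E} (hB : MeasurableSet B) (hBball : B ⊆ closedBall 0 1)
    {c β : ℝ} (hc : ∀ y ∈ B, c ≤ bumpKernel y) (hβ : 0 ≤ β)
    (hgB : ∀ y ∈ B, g (x + s • y) ≤ g x - β) :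
    ∃ y ∈ closedBall x s,
      g x + c * volume.real B / (∫ y : E, bumpKernel y) * β ≤ g y := by
  obtain ⟨y₀, hy₀, hmax⟩ := (isCompact_closedBall x s).exists_isMaxOn
    (nonempty_closedBall.2 hs.le) hg.continuousOn
  have hBfin : volume B ≠ ⊤ := measure_ne_top_of_subset hBball measure_closedBall_lt_top.ne
  have hpt (y : E) : bumpKernel y * g (x + s • y) ≤
      bumpKernel y * g y₀ - B.indicator (fun _ ↦ c * β) y := by
    by_cases hyB : y ∈ B
    · rw [indicator_of_mem hyB]
      have h₁ : bumpKernel y * g (x + s • y) ≤ bumpKernel y * (g y₀ - β) :=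
        mul_le_mul_of_nonneg_left ((hgB y hyB).trans
          (sub_le_sub_right (hmax (mem_closedBall_self hs.le)) β)) (bumpKernel_nonneg y)
      nlinarith [mul_le_mul_of_nonneg_right (hc y hyB) hβ]
    · rw [indicator_of_notMem hyB, sub_zero]
      by_cases hy : y ∈ closedBall 0 1
      · exact mul_le_mul_of_nonneg_left (hmax (add_smul_mem_closedBall hs.le hy))
          (bumpKernel_nonneg y)
      · simp [bumpKernel_eq_zero (by simpa using hy : 1 < ‖y‖).le]
  have hind : Integrable (B.indicator fun _ ↦ c * β) :=
    (integrable_indicator_iff hB).2 (integrableOn_const hBfin)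
  have hle : (∫ y : E, bumpKernel y) * g x ≤
      (∫ y : E, bumpKernel y) * g y₀ - volume.real B * (c * β) := by
    calc _ ≤ ∫ y, bumpKernel y * g (x + s • y) := h hs hx
      _ ≤ ∫ y, (bumpKernel y * g y₀ - B.indicator (fun _ ↦ c * β) y) :=
        integral_mono (integrable_bumpKernel_mul (by fun_prop))
          ((integrable_bumpKernel.mul_const _).sub hind) hpt
      _ = _ := by
        rw [integral_sub (integrable_bumpKernel.mul_const _) hind, integral_mul_const,
          integral_indicator_const _ hB, smul_eq_mul]
  refine ⟨y₀, hy₀, ?_⟩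
  have hm := integral_bumpKernel_pos (E := E)
  rw [← le_sub_iff_add_le', div_mul_eq_mul_div, div_le_iff₀ hm]
  linarith

lemma le_sub_half_of_lipschitzOnWith {X : Type*} [PseudoMetricSpace X] {g : X → ℝ} {U : Set X}
    {K : ℝ≥0} {x y z : X} {q r θ : ℝ} (hlip : LipschitzOnWith K g U) (hr : 0 ≤ r) (hy : y ∈ U)
    (hz : z ∈ U) (hyz : dist y z ≤ 4 * θ * r) (hθq : θ ≤ q / 8) (hgap : q * (K * r) ≤ g x - g z) :
    g y ≤ g x - (g x - g z) / 2 := by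
  have hgyz : g y - g z ≤ K * dist y z := (le_abs_self _).trans (hlip.dist_le_mul y hy z hz)
  have hclose : K * dist y z ≤ q / 2 * (K * r) := by
    calc _ ≤ K * (4 * θ * r) := by gcongr
      _ = 4 * θ * (K * r) := by ring
      _ ≤ q / 2 * (K * r) := by gcongr; linarith
  linarith

theorem exists_forall_submean_growth {q : ℝ} (hq : 0 < q) :
    ∃ θ > 0, θ < 1 ∧ ∃ σ > 0, ∀ {g : E → ℝ} {U : Set E} {K : ℝ≥0} {x z : E} {r : ℝ},
      Continuous g → SubMeanOn g U → LipschitzOnWith K g U → 0 < r → closedBall x r ⊆ U →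
      dist z x = r → q * (K * r) ≤ g x - g z →
      ∃ y, dist y x ≤ (1 - θ) * r ∧ g x + σ * (g x - g z) ≤ g y := by
  obtain ⟨θ, hθ, hθq⟩ : ∃ θ > 0, θ ≤ min (1 / 4) (q / 8) :=
    ⟨_, lt_min (by norm_num) (by positivity), le_rfl⟩
  obtain ⟨hθ₄, hθq⟩ := le_min_iff.1 hθq
  let c := expNegInvGlue (1 - (1 - θ) ^ 2)
  have hc : 0 < c := expNegInvGlue.pos_of_pos (by nlinarith)
  have hV : 0 < volume.real (closedBall (0 : E) θ) :=
    ENNReal.toReal_pos (measure_closedBall_pos _ _ hθ).ne' measure_closedBall_lt_top.ne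
  have hm := integral_bumpKernel_pos (E := E)
  refine ⟨θ, hθ, by linarith,
    c * volume.real (closedBall (0 : E) θ) / (∫ y : E, bumpKernel y) / 2, by positivity, ?_⟩
  intro g U K x z r hg hsub hlip hr hx hz hgap
  obtain ⟨b, hb, hbz⟩ := exists_closedBall_forall_dist_add_smul_le hθ.le (by linarith) hr hz
  have hs : 0 < (1 - θ) * r := mul_pos (by linarith) hr
  have hxs : closedBall x ((1 - θ) * r) ⊆ U :=
    (closedBall_subset_closedBall (by nlinarith)).trans hx
  have hb₁ : closedBall b θ ⊆ closedBall 0 1 :=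
    hb.trans (closedBall_subset_closedBall (by linarith))
  have hbump (y) (hy : y ∈ closedBall b θ) : c ≤ bumpKernel y := by
    have : ‖y‖ ≤ 1 - θ := by simpa using hb hy
    exact expNegInvGlue.monotone (by gcongr)
  have hgap₀ : 0 ≤ g x - g z := le_trans (by positivity) hgap
  have hnear (y) (hy : y ∈ closedBall b θ) :
      g (x + ((1 - θ) * r) • y) ≤ g x - (g x - g z) / 2 :=
    le_sub_half_of_lipschitzOnWith hlip hr.le (hxs (add_smul_mem_closedBall hs.le (hb₁ hy)))
      (hx hz.le) (hbz y hy) hθq hgap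
  have hvol : volume.real (closedBall b θ) = volume.real (closedBall (0 : E) θ) :=
    congrArg ENNReal.toReal (Measure.addHaar_closedBall_center _ b θ)
  obtain ⟨y, hy, hgy⟩ := hsub.exists_add_le hg hs hxs measurableSet_closedBall hb₁ hbump
    (by positivity) hnear
  rw [hvol] at hgy
  exact ⟨y, hy, by linarith⟩

end Growth

section Comparable

variable {X : Type*} {w : X → ℝ} {H H' : ℝ} {x y z : X}

/-- The values of `w` at `x` and `y` differ by a factor of at most `H`. -/
def Comparable (w : X → ℝ) (H : ℝ) (x y : X) : Prop :=
  w x ≤ H * w y ∧ w y ≤ H * w x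

lemma Comparable.refl (hH : 1 ≤ H) (hx : 0 ≤ w x) : Comparable w H x x :=
  ⟨le_mul_of_one_le_left hx hH, le_mul_of_one_le_left hx hH⟩

lemma Comparable.trans (hH : 0 ≤ H) (hH' : 0 ≤ H') (hxy : Comparable w H x y)
    (hyz : Comparable w H' y z) : Comparable w (H * H') x z := by
  constructor
  · calc w x ≤ H * w y := hxy.1
      _ ≤ H * (H' * w z) := by gcongr; exact hyz.1
      _ = H * H' * w z := by ring
  · calc w z ≤ H' * w y := hyz.2
      _ ≤ H' * (H * w x) := by gcongr; exact hxy.2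
      _ = H * H' * w x := by ring

lemma Comparable.mono (hH : 0 < H) (hHH' : H ≤ H') (hx : 0 ≤ w x) (h : Comparable w H x y) :
    Comparable w H' x y := by
  have hy : 0 ≤ w y := nonneg_of_mul_nonneg_right (hx.trans h.1) hH
  exact ⟨h.1.trans (by gcongr), h.2.trans (by gcongr)⟩

variable [PseudoMetricSpace X] {P P' : X → ℝ} {T : Set X} {r r' γ γ' : ℝ} {n N : ℕ}

/-- One step of a Harnack chain from `x`: with values of `w` comparable up to the factor `H`, one
either reaches the target `T` or moves by at most `r` to a point where `P` is larger by `γ`. -/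
def HasHarnackStep (w P : X → ℝ) (T : Set X) (H r γ : ℝ) (x : X) : Prop :=
  (∃ y ∈ T, Comparable w H x y) ∨ ∃ y, dist y x ≤ r ∧ P x + γ ≤ P y ∧ Comparable w H x y

lemma HasHarnackStep.mono (hH : 0 < H) (hHH' : H ≤ H') (hx : 0 ≤ w x)
    (hP : ∀ y, dist y x ≤ r → P x + γ ≤ P y → dist y x ≤ r' ∧ P' x + γ' ≤ P' y)
    (h : HasHarnackStep w P T H r γ x) : HasHarnackStep w P' T H' r' γ' x := by
  obtain ⟨y, hy, hxy⟩ | ⟨y, hy, hPy, hxy⟩ := h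
  · exact .inl ⟨y, hy, hxy.mono hH hHH' hx⟩
  · obtain ⟨hy', hPy'⟩ := hP y hy hPy
    exact .inr ⟨y, hy', hPy', hxy.mono hH hHH' hx⟩

lemma HasHarnackStep.iterate (hH : 1 ≤ H) (hr : 0 ≤ r) (hγ : 0 ≤ γ) (hx : 0 ≤ w x)
    (hstep : ∀ y, dist y x ≤ N * r → P x ≤ P y → HasHarnackStep w P T H r γ y) (hn : n ≤ N) :
    HasHarnackStep w P T (H ^ n) (n * r) (n * γ) x := by
  have hH₀ : 0 < H := one_pos.trans_le hH
  induction n with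
  | zero => exact .inr ⟨x, by simp [Comparable]⟩
  | succ n ih =>
    have hnN : (n : ℝ) * r ≤ N * r := by gcongr; lia
    obtain ⟨z, hz, hxz⟩ | ⟨y, hy, hPy, hxy⟩ := ih (by lia)
    · exact .inl ⟨z, hz, hxz.mono (by positivity) (pow_le_pow_right₀ hH (by lia)) hx⟩
    obtain ⟨z, hz, hyz⟩ | ⟨z, hz, hPz, hyz⟩ :=
      hstep y (hy.trans hnN) (le_trans (le_add_of_nonneg_right (by positivity)) hPy)
    · exact .inl ⟨z, hz, pow_succ H n ▸ hxy.trans (by positivity) hH₀.le hyz⟩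
    · refine .inr ⟨z, ?_, ?_, pow_succ H n ▸ hxy.trans (by positivity) hH₀.le hyz⟩
      · push_cast
        linarith [dist_triangle z y x]
      · push_cast
        linarith

end Comparable

section Harnack

open Module

variable {E : Type*} [NormedAddCommGroup E] [InnerProductSpace ℝ E] [FiniteDimensional ℝ E]
  [MeasurableSpace E] [BorelSpace E] {w : E → ℝ} {Ω : Set E} {x y : E}

/-- `w` is positive and harmonic on `Ω`, harmonicity being expressed by the mean value property. -/
structure IsPositiveHarmonicOn (w : E → ℝ) (Ω : Set E) : Prop where
  pos : ∀ x ∈ Ω, 0 < w x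
  eq_average : ∀ x r, 0 < r → ball x r ⊆ Ω → w x = ⨍ y in ball x r, w y

lemma IsPositiveHarmonicOn.le_two_pow_mul (hw : IsPositiveHarmonicOn w Ω) {ρ : ℝ} (hρ : 0 < ρ)
    (hy : ball y (2 * ρ) ⊆ Ω) (hxy : dist x y ≤ ρ) : w x ≤ 2 ^ finrank ℝ E * w y := by
  have hsub : ball x ρ ⊆ ball y (2 * ρ) := ball_subset_ball' (by linarith)
  have hmean_x := hw.eq_average x ρ hρ (hsub.trans hy)
  have hmean_y := hw.eq_average y (2 * ρ) (by positivity) hy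
  rw [setAverage_eq, smul_eq_mul] at hmean_x hmean_y
  have hint : IntegrableOn w (ball y (2 * ρ)) := by
    by_contra hnot
    rw [integral_undef hnot, mul_zero] at hmean_y
    exact (hw.pos y (hy (mem_ball_self (by positivity)))).ne' hmean_y
  have hmono : ∫ z in ball x ρ, w z ≤ ∫ z in ball y (2 * ρ), w z :=
    setIntegral_mono_set hint ((ae_restrict_iff' measurableSet_ball).2
      (.of_forall fun z hz ↦ (hw.pos z (hy hz)).le)) hsub.eventuallyLE
  have hvol : volume.real (ball y (2 * ρ)) = 2 ^ finrank ℝ E * volume.real (ball x ρ) := by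
    rw [Measure.real, Measure.addHaar_ball_mul_of_pos _ _ two_pos, ENNReal.toReal_mul,
      ENNReal.toReal_ofReal (by positivity), Measure.real, Measure.addHaar_ball_center _ x]
  rw [hmean_x, hmean_y, hvol, mul_inv, mul_assoc, mul_inv_cancel_left₀ (by positivity)]
  gcongr

lemma IsPositiveHarmonicOn.le_pow_mul (hw : IsPositiveHarmonicOn w Ω) {S : Set E}
    (hS : Convex ℝ S) {ρ : ℝ} (hρ : 0 < ρ) (hSΩ : ∀ z ∈ S, ball z (2 * ρ) ⊆ Ω) (n : ℕ)
    (hx : x ∈ S) (hy : y ∈ S) (hxy : dist x y ≤ n * ρ) :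
    w x ≤ (2 ^ finrank ℝ E) ^ n * w y := by
  induction n generalizing y with
  | zero =>
    obtain rfl : x = y := dist_le_zero.1 (by simpa using hxy)
    simp
  | succ n ih =>
    have hn : (0 : ℝ) < n + 1 := by positivity
    have hfrac : (n : ℝ) / (n + 1) ≤ 1 := (div_le_one hn).2 (by linarith)
    let q := AffineMap.lineMap x y ((n : ℝ) / (n + 1))
    have hq : q ∈ S := hS.lineMap_mem hx hy ⟨by positivity, hfrac⟩
    have hxy' : dist x y / (n + 1) ≤ ρ := by
      rw [div_le_iff₀ hn]
      push_cast at hxy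
      linarith
    have hxq : dist x q ≤ n * ρ := by
      rw [dist_left_lineMap, Real.norm_of_nonneg (by positivity), div_mul_eq_mul_div, mul_div_assoc]
      gcongr
    have hqy : dist q y ≤ ρ := by
      rw [dist_lineMap_right, Real.norm_of_nonneg (sub_nonneg.2 hfrac)]
      convert hxy' using 1
      field_simp
      ring
    calc w x ≤ (2 ^ finrank ℝ E) ^ n * w q := ih hq hxq
      _ ≤ (2 ^ finrank ℝ E) ^ n * (2 ^ finrank ℝ E * w y) := by
        gcongr
        exact hw.le_two_pow_mul hρ (hSΩ y hy) hqy
      _ = _ := by ring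

lemma IsPositiveHarmonicOn.comparable (hw : IsPositiveHarmonicOn w Ω) {r θ : ℝ} (hr : 0 < r)
    (hθ : 0 < θ) (hx : ball x r ⊆ Ω) (hxy : dist y x ≤ (1 - θ) * r) :
    Comparable w ((2 ^ finrank ℝ E) ^ ⌈2 / θ⌉₊) x y := by
  have hball (z) (hz : z ∈ closedBall x ((1 - θ) * r)) : ball z (2 * (θ * r / 2)) ⊆ Ω :=
    (ball_subset_ball' (by linarith [mem_closedBall.1 hz])).trans hx
  have hx₀ : x ∈ closedBall x ((1 - θ) * r) := mem_closedBall_self (dist_nonneg.trans hxy)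
  have hdist : dist y x ≤ ⌈2 / θ⌉₊ * (θ * r / 2) := by
    calc dist y x ≤ r := by nlinarith
      _ = 2 / θ * (θ * r / 2) := by field_simp
      _ ≤ _ := by gcongr; exact Nat.le_ceil _
  have hS := convex_closedBall x ((1 - θ) * r)
  exact ⟨hw.le_pow_mul hS (by positivity) hball _ hx₀ hxy (by rwa [dist_comm]),
    hw.le_pow_mul hS (by positivity) hball _ hxy hx₀ hdist⟩

end Harnack

section ShortStep

open Module InnerProductSpace
open scoped NNReal Laplacian ContDiff

variable {E : Type*} [NormedAddCommGroup E] [InnerProductSpace ℝ E] [FiniteDimensional ℝ E]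
  [MeasurableSpace E] [BorelSpace E] {Ω : Set E} {φ w : E → ℝ} {x : E} {R : ℝ}

lemma exists_dist_eq_of_not_ball_subset {X : Type*} [PseudoMetricSpace X] [ProperSpace X]
    {Ω : Set X} {x : X} {R : ℝ} (hΩ : IsOpen Ω) (hx : x ∈ Ω) (hR : ¬ball x R ⊆ Ω) :
    ∃ r, 0 < r ∧ r < R ∧ ball x r ⊆ Ω ∧ ∃ z ∉ Ω, dist z x = r := by
  obtain ⟨y, hy, hyΩ⟩ := Set.not_subset.1 hR
  obtain ⟨z, hz, hxz⟩ := hΩ.isClosed_compl.exists_infDist_eq_dist ⟨y, hyΩ⟩ x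
  refine ⟨infDist x Ωᶜ, ?_, ?_, ball_infDist_compl_subset, z, hz, by rw [hxz, dist_comm]⟩
  · exact (hΩ.isClosed_compl.notMem_iff_infDist_pos ⟨y, hyΩ⟩).1 (by simpa)
  · exact (infDist_le_dist_of_mem hyΩ).trans_lt (dist_comm x y ▸ hy)

/-- `φ` is an `L`-Lipschitz subharmonic function on the unit ball which vanishes outside `Ω` and
grows at least at rate `κ` away from the zero set in the half ball. The complement of `Ω` in the
unit ball has to be nonempty because `infDist` to the empty set is `0`. -/
structure IsNondegenerateSubsolution (L : ℝ≥0) (κ : ℝ) (Ω : Set E) (φ : E → ℝ) : Prop where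
  isOpen : IsOpen Ω
  nonempty_diff : (ball 0 1 \ Ω).Nonempty
  continuous : Continuous φ
  eq_zero : ∀ x ∈ ball 0 1 \ Ω, φ x = 0
  lipschitzOnWith : LipschitzOnWith L φ (ball 0 1)
  mul_infDist_le : ∀ x ∈ ball 0 (1 / 2), κ * infDist x (ball 0 1 \ Ω) ≤ φ x
  isWeaklySubharmonicOn : IsWeaklySubharmonicOn φ (ball 0 1)

variable {L : ℝ≥0} {κ δ : ℝ}

lemma IsNondegenerateSubsolution.mem_of_pos (h : IsNondegenerateSubsolution L κ Ω φ)
    (hx : x ∈ ball 0 1) (hφx : 0 < φ x) : x ∈ Ω := by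
  by_contra hxΩ
  exact hφx.ne' (h.eq_zero x ⟨hx, hxΩ⟩)

lemma IsNondegenerateSubsolution.lt_of_ball_subset (h : IsNondegenerateSubsolution L κ Ω φ)
    (hκ : 0 < κ) {ℓ : ℝ} (hx : x ∈ ball 0 (1 / 2)) (hℓ : ball x ℓ ⊆ Ω) (hδ : δ < κ * ℓ) :
    δ < φ x := by
  have hdist : ℓ ≤ infDist x (ball 0 1 \ Ω) := (le_infDist h.nonempty_diff).2 fun y hy ↦ by
    by_contra! hxy
    exact hy.2 (hℓ (mem_ball'.2 hxy))
  exact (hδ.trans_le (by gcongr)).trans_le (h.mul_infDist_le x hx)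

theorem exists_tilted_growth {q : ℝ} (hq : 0 < q) :
    ∃ σ > 0, ∃ H ≥ 1, ∀ {L : ℝ≥0} {κ : ℝ} {Ω : Set E} {φ w : E → ℝ} {x a : E} {R β : ℝ},
      IsNondegenerateSubsolution L κ Ω φ → IsPositiveHarmonicOn w Ω → x ∈ Ω → ¬ball x R ⊆ Ω →
      closedBall x R ⊆ ball 0 1 → (∀ z ∈ ball x R, β ≤ φ x + inner ℝ a (z - x)) →
      q * ((L + ‖a‖) * R) ≤ β →
      ∃ y ∈ ball x R, φ x - inner ℝ a x + σ * β ≤ φ y - inner ℝ a y ∧ Comparable w H x y := by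
  obtain ⟨θ, hθ, hθ₁, σ, hσ, hgrowth⟩ := exists_forall_submean_growth (E := E) hq
  refine ⟨σ, hσ, (2 ^ finrank ℝ E) ^ ⌈2 / θ⌉₊, one_le_pow₀ (one_le_pow₀ one_le_two), ?_⟩
  intro L κ Ω φ w x a R β h hw hx hRΩ hR hβ hqβ
  obtain ⟨r, hr, hrR, hrΩ, z, hz, hzx⟩ := exists_dist_eq_of_not_ball_subset h.isOpen hx hRΩ
  have hr₁ : closedBall x r ⊆ ball 0 1 := (closedBall_subset_closedBall hrR.le).trans hR
  have hφz : φ z = 0 := h.eq_zero z ⟨hr₁ hzx.le, hz⟩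
  have hlip : LipschitzOnWith (L + ‖a‖₊) (fun y ↦ φ y - inner ℝ a y) (ball 0 1) :=
    h.lipschitzOnWith.sub ((innerSL ℝ a).lipschitz.weaken
      (innerSL_apply_norm ℝ a).le).lipschitzOnWith
  have hgap : β ≤ (φ x - inner ℝ a x) - (φ z - inner ℝ a z) := by
    have := hβ z (hzx.trans_lt hrR)
    rw [inner_sub_right] at this
    linarith
  have hsub := (h.isWeaklySubharmonicOn.subMeanOn h.continuous).sub_inner h.continuous a
  have hqr : q * ((L + ‖a‖₊ : ℝ≥0) * r) ≤ q * ((L + ‖a‖) * R) := by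
    push_cast
    gcongr
  obtain ⟨y, hyx, hy⟩ := hgrowth (g := fun y ↦ φ y - inner ℝ a y)
    (h.continuous.sub (by fun_prop)) hsub hlip hr hr₁ hzx ((hqr.trans hqβ).trans hgap)
  refine ⟨y, ?_, le_trans (by gcongr) hy, hw.comparable hr hθ hrΩ hyx⟩
  exact hyx.trans_lt ((mul_le_of_le_one_left hr.le (by linarith [hθ₁])).trans_lt hrR)

lemma IsNondegenerateSubsolution.exists_lt_and_comparable
    (h : IsNondegenerateSubsolution L κ Ω φ) (hw : IsPositiveHarmonicOn w Ω) (hκ : 0 < κ) {C : ℝ}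
    (hC : 0 < C) (hδ : 0 < δ) (hRC : R ≤ C * δ) (hκR : 2 * δ / κ ≤ R)
    (hx : ‖x‖ < 1 / 2 + (R - 2 * δ / κ)) (hRΩ : ball x R ⊆ Ω) :
    ∃ y ∈ ball 0 1, δ < φ y ∧
      Comparable w ((2 ^ finrank ℝ E) ^ ⌈2 / (2 / (κ * C))⌉₊) x y := by
  obtain ⟨p, hxp, hp⟩ := exists_dist_le_lt (x := x) (z := 0) (sub_nonneg.2 hκR)
    (by norm_num : (0 : ℝ) < 1 / 2) (by simpa using hx)
  have hpΩ : ball p (2 * δ / κ) ⊆ Ω :=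
    (ball_subset_ball' (by linarith [dist_comm x p])).trans hRΩ
  have hδp : δ < φ p := h.lt_of_ball_subset hκ hp hpΩ (by rw [mul_div_cancel₀ _ hκ.ne']; linarith)
  refine ⟨p, ball_subset_ball (by norm_num) hp, hδp, hw.comparable (r := R) ?_ ?_ hRΩ ?_⟩
  · exact lt_of_lt_of_le (by positivity) hκR
  · positivity
  · have : 2 / (κ * C) * R ≤ 2 * δ / κ := by
      calc _ ≤ 2 / (κ * C) * (C * δ) := by gcongr
        _ = 2 * δ / κ := by field_simp
    linarith [dist_comm x p]

theorem exists_hasHarnackStep_sub_inner (L : ℝ≥0) {κ C M : ℝ} (hκ : 0 < κ) (hC : 0 < C)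
    (hM : 0 ≤ M) :
    ∃ σ > 0, ∃ H ≥ 1, ∀ {Ω : Set E} {φ w : E → ℝ} {x a : E} {R δ : ℝ},
      IsNondegenerateSubsolution L κ Ω φ → IsPositiveHarmonicOn w Ω → 0 < δ → ‖a‖ ≤ M →
      R ≤ C * δ → 2 * δ / κ ≤ R → ‖x‖ < 1 / 2 + (R - 2 * δ / κ) → closedBall x R ⊆ ball 0 1 →
      δ / 4 ≤ φ x - ‖a‖ * R →
      HasHarnackStep w (fun y ↦ φ y - inner ℝ a y) {y ∈ ball 0 1 | δ < φ y} H R (σ * δ) x := by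
  have hq : 0 < 1 / (4 * (L + M + 1) * C) := by positivity
  obtain ⟨σ, hσ, H₁, hH₁, hgrowth⟩ := exists_tilted_growth (E := E) hq
  let H₂ : ℝ := (2 ^ finrank ℝ E) ^ ⌈2 / (2 / (κ * C))⌉₊
  refine ⟨σ / 4, by positivity, max H₁ H₂, le_max_of_le_left hH₁, ?_⟩
  intro Ω φ w x a R δ h hw hδ ha hRC hκR hx hR hφx
  have hR₀ : 0 < R := lt_of_lt_of_le (by positivity) hκR
  have hxΩ : x ∈ Ω := h.mem_of_pos (hR (mem_closedBall_self hR₀.le)) (by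
    have : 0 ≤ ‖a‖ * R := by positivity
    linarith)
  by_cases hRΩ : ball x R ⊆ Ω
  · obtain ⟨y, hy, hδy, hxy⟩ := h.exists_lt_and_comparable hw hκ hC hδ hRC hκR hx hRΩ
    exact .inl ⟨y, ⟨hy, hδy⟩, hxy.mono (by positivity) (le_max_right _ _) (hw.pos x hxΩ).le⟩
  · have hβ (z) (hz : z ∈ ball x R) : δ / 4 ≤ φ x + inner ℝ a (z - x) := by
      have hz' : ‖z - x‖ ≤ R := (mem_ball_iff_norm.1 hz).le
      have : -(‖a‖ * R) ≤ inner ℝ a (z - x) :=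
        (neg_le_neg (by gcongr)).trans (neg_le_of_abs_le (abs_real_inner_le_norm a (z - x)))
      linarith
    have hLa : L + ‖a‖ ≤ L + M + 1 := by linarith
    have hqβ : 1 / (4 * (L + M + 1) * C) * ((L + ‖a‖) * R) ≤ δ / 4 := by
      calc _ ≤ 1 / (4 * (L + M + 1) * C) * ((L + M + 1) * (C * δ)) := by gcongr
        _ = δ / 4 := by field_simp
    obtain ⟨y, hy, hgy, hxy⟩ := hgrowth h hw hxΩ hRΩ hR hβ hqβ
    refine .inr ⟨y, (mem_ball.1 hy).le, ?_,
      hxy.mono (by positivity) (le_max_left _ _) (hw.pos x hxΩ).le⟩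
    linarith

end ShortStep

section OrthonormalBasis

open InnerProductSpace
open scoped ContDiff NNReal

variable {E : Type*} [NormedAddCommGroup E] [InnerProductSpace ℝ E] [FiniteDimensional ℝ E]
  [MeasurableSpace E] [BorelSpace E] {ι : Type*} [Fintype ι]

lemma isWeaklySubharmonicOn_iff_sum_fderiv_fderiv (b : OrthonormalBasis ι ℝ E) {φ : E → ℝ}
    {U : Set E} :
    IsWeaklySubharmonicOn φ U ↔
      ∀ ψ : E → ℝ, ContDiff ℝ ∞ ψ → HasCompactSupport ψ → tsupport ψ ⊆ U → (∀ x, 0 ≤ ψ x) →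
        0 ≤ ∫ x in U, φ x * ∑ i, fderiv ℝ (fun y ↦ fderiv ℝ ψ y (b i)) x (b i) :=
  forall₂_congr fun _ hψ ↦ by
    simp only [laplacian_eq_sum_fderiv_fderiv b (hψ.of_le (WithTop.coe_le_coe.2 le_top))]

lemma isNondegenerateSubsolution_of_sum_fderiv_fderiv (b : OrthonormalBasis ι ℝ E) {L : ℝ≥0}
    {κ : ℝ} {Ω : Set E} {φ : E → ℝ} (hΩ : IsOpen Ω) (h0 : 0 ∈ frontier Ω) (hφ : Continuous φ)
    (hzero : ∀ x ∈ ball 0 1 \ Ω, φ x = 0)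
    (hlip : ∀ x ∈ ball 0 1, ∀ y ∈ ball 0 1, |φ x - φ y| ≤ L * dist x y)
    (hnondeg : ∀ x ∈ ball 0 (1 / 2), κ * infDist x (ball 0 1 \ Ω) ≤ φ x)
    (hsub : ∀ ψ : E → ℝ, ContDiff ℝ ∞ ψ → HasCompactSupport ψ → tsupport ψ ⊆ ball 0 1 →
      (∀ x, 0 ≤ ψ x) →
      0 ≤ ∫ x in ball 0 1, φ x * ∑ i, fderiv ℝ (fun y ↦ fderiv ℝ ψ y (b i)) x (b i)) :
    IsNondegenerateSubsolution L κ Ω φ where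
  isOpen := hΩ
  nonempty_diff := ⟨0, mem_ball_self one_pos, (hΩ.frontier_eq ▸ h0).2⟩
  continuous := hφ
  eq_zero := hzero
  lipschitzOnWith := .of_dist_le_mul hlip
  mul_infDist_le := hnondeg
  isWeaklySubharmonicOn := (isWeaklySubharmonicOn_iff_sum_fderiv_fderiv b).2 hsub

end OrthonormalBasis

section Chain

open Module
open scoped NNReal

section InnerProduct

variable {E : Type*} [NormedAddCommGroup E] [InnerProductSpace ℝ E]

lemma norm_le_inner_normalize_add {v : E} (hv : v ≠ 0) (x : E) :
    ‖x‖ ≤ inner ℝ (‖v‖⁻¹ • v) x + dist x v ^ 2 / (2 * ‖v‖) := by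
  have hv₀ : ‖v‖ ≠ 0 := norm_ne_zero_iff.2 hv
  have hsq : dist x v ^ 2 = ‖x‖ ^ 2 - 2 * inner ℝ v x + ‖v‖ ^ 2 := by
    rw [dist_eq_norm, norm_sub_sq_real, real_inner_comm]
  rw [real_inner_smul_left, hsq, ← sub_nonneg]
  calc (0 : ℝ) ≤ (‖x‖ - ‖v‖) ^ 2 / (2 * ‖v‖) := by positivity
    _ = _ := by field_simp [hv₀]; ring

/-- `φ` lowered by `ε` times the height above a cap: the correction vanishes unless `x` exceeds
level `1 / 2 - 3 * ℓ` in the direction `e`, so a large value of the tilted potential confines `x`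
to a neighbourhood of the half ball. -/
noncomputable def tiltedPotential (φ : E → ℝ) (ε ℓ : ℝ) (e x : E) : ℝ :=
  φ x - ε * max (inner ℝ e x - 1 / 2 + 3 * ℓ) 0

variable {φ : E → ℝ} {ε ℓ : ℝ} {e x y : E}

lemma tiltedPotential_le (hε : 0 ≤ ε) : tiltedPotential φ ε ℓ e x ≤ φ x :=
  sub_le_self _ (mul_nonneg hε (le_max_right _ _))

lemma tiltedPotential_of_nonneg (hx : 0 ≤ inner ℝ e x - 1 / 2 + 3 * ℓ) :
    tiltedPotential φ ε ℓ e x = φ x - ε * (inner ℝ e x - 1 / 2 + 3 * ℓ) := by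
  rw [tiltedPotential, max_eq_left hx]

lemma sub_le_tiltedPotential (hε : 0 ≤ ε) (he : ‖e‖ ≤ 1) {s : ℝ} (hs : 0 ≤ s + 3 * ℓ)
    (hx : ‖x‖ ≤ 1 / 2 + s) : φ x - ε * (s + 3 * ℓ) ≤ tiltedPotential φ ε ℓ e x := by
  have hex : inner ℝ e x ≤ ‖x‖ :=
    (real_inner_le_norm e x).trans (mul_le_of_le_one_left (norm_nonneg x) he)
  refine sub_le_sub_left (mul_le_mul_of_nonneg_left (max_le ?_ hs) hε) _
  linarith

lemma quarter_le_tiltedPotential {κ δ : ℝ} (hκ : 0 < κ) (hδ : 0 < δ) (hε : 0 ≤ ε)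
    (hεκ : ε ≤ κ / 24) (he : ‖e‖ ≤ 1) (hx : ‖x‖ ≤ 1 / 2) (hφx : δ / 2 ≤ φ x) :
    δ / 4 ≤ tiltedPotential φ ε (2 * δ / κ) e x := by
  have htilt := sub_le_tiltedPotential (φ := φ) hε he (s := 0) (ℓ := 2 * δ / κ) (by positivity)
    (by rwa [add_zero])
  have hcost : ε * (0 + 3 * (2 * δ / κ)) ≤ δ / 4 := by
    calc _ ≤ κ / 24 * (0 + 3 * (2 * δ / κ)) := by gcongr
      _ = δ / 4 := by field_simp; ring
  linarith

lemma norm_le_inner_normalize_add_two_mul_sq {ρ : ℝ} (hρ : ρ ≤ 1 / 4) (hy : 1 / 2 ≤ ‖y‖)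
    (hyx : dist y x ≤ ρ) : ‖y‖ ≤ inner ℝ (‖x‖⁻¹ • x) y + 2 * ρ ^ 2 := by
  have hx : 1 / 4 ≤ ‖x‖ := by
    linarith [norm_sub_norm_le y x, dist_eq_norm y x]
  have hx₀ : x ≠ 0 := norm_pos_iff.1 (by linarith)
  calc ‖y‖ ≤ inner ℝ (‖x‖⁻¹ • x) y + dist y x ^ 2 / (2 * ‖x‖) := norm_le_inner_normalize_add hx₀ y
    _ ≤ inner ℝ (‖x‖⁻¹ • x) y + ρ ^ 2 / (2 * (1 / 4)) := by gcongr
    _ = _ := by ring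

end InnerProduct

variable {E : Type*} [NormedAddCommGroup E] [InnerProductSpace ℝ E] [FiniteDimensional ℝ E]
  [MeasurableSpace E] [BorelSpace E]

lemma exists_hasHarnackStep_of_norm_lt (L : ℝ≥0) {κ : ℝ} (hκ : 0 < κ) :
    ∃ σ > 0, ∃ H ≥ 1, ∀ {Ω : Set E} {φ w : E → ℝ} {x e : E} {ε δ : ℝ},
      IsNondegenerateSubsolution L κ Ω φ → IsPositiveHarmonicOn w Ω → 0 < δ → 0 ≤ ε →
      ε ≤ κ * σ / 16 → ‖e‖ ≤ 1 → ‖x‖ < 1 / 2 → 2 * δ / κ ≤ 1 / 4 → δ / 4 ≤ φ x →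
      HasHarnackStep w (tiltedPotential φ ε (2 * δ / κ) e) {y ∈ ball 0 1 | δ < φ y} H
        (2 * δ / κ) (σ / 2 * δ) x := by
  obtain ⟨σ, hσ, H, hH, hstep⟩ :=
    exists_hasHarnackStep_sub_inner (E := E) L hκ (C := 2 / κ) (by positivity) le_rfl
  refine ⟨σ, hσ, H, hH, fun {Ω φ w x e ε δ} h hw hδ hε hεσ he hx hδκ hφx ↦ ?_⟩
  have hball : closedBall x (2 * δ / κ) ⊆ ball 0 1 :=
    (closedBall_subset_ball' (by rw [dist_zero_right]; linarith))
  have hxΩ : x ∈ Ω := h.mem_of_pos (ball_subset_ball (by norm_num) (mem_ball_zero_iff.2 hx))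
    (lt_of_lt_of_le (by positivity) hφx)
  refine (hstep (a := 0) h hw hδ norm_zero.le (div_mul_eq_mul_div 2 κ δ).ge le_rfl
    (by rwa [sub_self, add_zero]) hball (by simpa)).mono (one_pos.trans_le hH) le_rfl
    (hw.pos x hxΩ).le fun y hy hφy ↦ ⟨hy, ?_⟩
  have hy' : ‖y‖ ≤ 1 / 2 + 2 * δ / κ := by
    linarith [norm_le_norm_add_norm_sub x y, dist_eq_norm y x, norm_sub_rev x y]
  have htilt := sub_le_tiltedPotential (φ := φ) hε he (ℓ := 2 * δ / κ) (by positivity) hy'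
  have hcost : ε * (2 * δ / κ + 3 * (2 * δ / κ)) ≤ σ / 2 * δ := by
    calc _ ≤ κ * σ / 16 * (2 * δ / κ + 3 * (2 * δ / κ)) := by gcongr
      _ = σ / 2 * δ := by field_simp; ring
  simp only [inner_zero_left, sub_zero] at hφy
  linarith [tiltedPotential_le (φ := φ) (ℓ := 2 * δ / κ) (e := e) (x := x) hε]

lemma exists_hasHarnackStep_of_le_norm (L : ℝ≥0) {κ ε : ℝ} (hκ : 0 < κ) (hε : 0 < ε) :
    ∃ σ > 0, ∃ H ≥ 1, ∀ {Ω : Set E} {φ w : E → ℝ} {x e : E} {δ : ℝ},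
      IsNondegenerateSubsolution L κ Ω φ → IsPositiveHarmonicOn w Ω → 0 < δ → ‖e‖ ≤ 1 →
      1 / 2 ≤ ‖x‖ → ‖x‖ ≤ inner ℝ e x + 2 * δ / κ → ‖x‖ + δ / ε < 1 → φ x ≤ δ →
      δ / 4 ≤ tiltedPotential φ ε (2 * δ / κ) e x →
      HasHarnackStep w (tiltedPotential φ ε (2 * δ / κ) e) {y ∈ ball 0 1 | δ < φ y} H
        (δ / ε) (σ * δ) x := by
  obtain ⟨σ, hσ, H, hH, hstep⟩ :=
    exists_hasHarnackStep_sub_inner (E := E) L hκ (C := 1 / ε) (by positivity) hε.le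
  refine ⟨σ, hσ, H, hH, fun {Ω φ w x e δ} h hw hδ he hx hxe hx₁ hφx hPx ↦ ?_⟩
  have hℓ : 0 < 2 * δ / κ := by positivity
  set R := inner ℝ e x - 1 / 2 + 3 * (2 * δ / κ) with hR
  have hR₀ : 0 < R := by linarith
  have hP : tiltedPotential φ ε (2 * δ / κ) e x = φ x - ε * R := tiltedPotential_of_nonneg hR₀.le
  have hRδ : R ≤ δ / ε := (le_div_iff₀' hε).2 (by linarith)
  have hball : closedBall x R ⊆ ball 0 1 :=
    closedBall_subset_ball' (by rw [dist_zero_right]; linarith)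
  have hxΩ : x ∈ Ω := h.mem_of_pos (hball (mem_closedBall_self hR₀.le))
    (by linarith [mul_pos hε hR₀])
  have ha : ‖ε • e‖ ≤ ε := by
    simpa [norm_smul, abs_of_pos hε] using mul_le_of_le_one_right hε.le he
  have hφa : δ / 4 ≤ φ x - ‖ε • e‖ * R :=
    hPx.trans (hP.trans_le (sub_le_sub_left (mul_le_mul_of_nonneg_right ha hR₀.le) _))
  refine (hstep h hw hδ ha ((div_mul_eq_mul_div 1 ε δ).trans (by rw [one_mul]) ▸ hRδ)
    (by linarith) (by linarith) hball hφa).mono (one_pos.trans_le hH) le_rfl (hw.pos x hxΩ).le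
    fun y hy hφy ↦ ⟨hy.trans hRδ, ?_⟩
  have hinner : |inner ℝ e y - inner ℝ e x| ≤ R := by
    rw [← inner_sub_right]
    exact (abs_real_inner_le_norm e _).trans
      ((mul_le_of_le_one_left (norm_nonneg _) he).trans (dist_eq_norm y x ▸ hy))
  rw [hP, tiltedPotential_of_nonneg (by linarith [(abs_le.1 hinner).1])]
  simp only [real_inner_smul_left] at hφy
  rw [hR]
  linarith

theorem exists_hasHarnackStep_tiltedPotential (L : ℝ≥0) {κ : ℝ} (hκ : 0 < κ) :
    ∃ ε > 0, ε ≤ κ / 24 ∧ ∃ η > 0, ∃ H ≥ 1, ∀ {Ω : Set E} {φ w : E → ℝ} {x e : E} {δ : ℝ},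
      IsNondegenerateSubsolution L κ Ω φ → IsPositiveHarmonicOn w Ω → 0 < δ → ‖e‖ ≤ 1 →
      2 * δ / κ ≤ 1 / 4 → (1 / 2 ≤ ‖x‖ → ‖x‖ ≤ inner ℝ e x + 2 * δ / κ) → ‖x‖ + δ / ε < 1 →
      δ / 4 ≤ tiltedPotential φ ε (2 * δ / κ) e x →
      HasHarnackStep w (tiltedPotential φ ε (2 * δ / κ) e) {y ∈ ball 0 1 | δ < φ y} H
        (δ / ε) (η * δ) x := by
  obtain ⟨σ₀, hσ₀, H₀, hH₀, hinner⟩ := exists_hasHarnackStep_of_norm_lt (E := E) L hκ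
  let ε := min (κ / 24) (κ * σ₀ / 16)
  have hε : 0 < ε := by positivity
  have hεκ : ε ≤ κ / 24 := min_le_left _ _
  obtain ⟨σ₁, hσ₁, H₁, hH₁, houter⟩ := exists_hasHarnackStep_of_le_norm (E := E) L hκ hε
  refine ⟨ε, hε, hεκ, min (σ₀ / 2) σ₁, by positivity, max H₀ H₁, le_max_of_le_left hH₀, ?_⟩
  intro Ω φ w x e δ h hw hδ he hδκ hxe hx₁ hPx
  have hPφ : tiltedPotential φ ε (2 * δ / κ) e x ≤ φ x := tiltedPotential_le hε.le
  have hx : x ∈ ball 0 1 := by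
    have : 0 < δ / ε := by positivity
    exact mem_ball_zero_iff.2 (by linarith)
  have hwx : 0 < w x := hw.pos x (h.mem_of_pos hx (by linarith))
  by_cases hφx : δ < φ x
  · exact .inl ⟨x, ⟨hx, hφx⟩, .refl (le_max_of_le_left hH₀) hwx.le⟩
  rcases lt_or_ge ‖x‖ (1 / 2) with hx₂ | hx₂
  · refine (hinner h hw hδ hε.le (min_le_right _ _) he hx₂ hδκ (hPx.trans hPφ)).mono
      (by positivity) (le_max_left _ _) hwx.le fun y hy hPy ↦ ⟨hy.trans ?_, le_trans ?_ hPy⟩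
    · rw [div_le_div_iff₀ hκ hε]
      nlinarith
    · gcongr
      exact min_le_left _ _
  · refine (houter h hw hδ he hx₂ (hxe hx₂) hx₁ (not_lt.1 hφx) hPx).mono
      (by positivity) (le_max_right _ _) hwx.le fun y hy hPy ↦ ⟨hy, le_trans ?_ hPy⟩
    gcongr
    exact min_le_right _ _

lemma exists_chain_length_bounds (N : ℕ) {κ ε : ℝ} (hκ : 0 < κ) (hε : 0 < ε) :
    ∃ δ₀ > 0, ∀ {δ : ℝ}, 0 < δ → δ ≤ δ₀ →
      N * (δ / ε) + δ / ε ≤ 1 / 4 ∧ 2 * (N * (δ / ε)) ^ 2 ≤ 2 * δ / κ := by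
  refine ⟨min (ε / (4 * (N + 1))) (ε ^ 2 / (κ * (N + 1) ^ 2)), by positivity,
    fun {δ} hδ hδ₀ ↦ ⟨?_, ?_⟩⟩
  · have := (le_div_iff₀ (by positivity)).1 (hδ₀.trans (min_le_left _ _))
    rw [← add_one_mul, ← mul_div_assoc, div_le_iff₀ hε]
    linarith
  · have := (le_div_iff₀ (by positivity)).1 (hδ₀.trans (min_le_right _ _))
    calc _ ≤ 2 * ((N + 1) * (δ / ε)) ^ 2 := by gcongr; linarith
      _ = 2 * δ / κ * (δ * (κ * (N + 1) ^ 2) / ε ^ 2) := by field_simp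
      _ ≤ 2 * δ / κ * 1 := by gcongr; exact (div_le_one (by positivity)).2 this
      _ = _ := mul_one _

theorem stmt_9_general (L : ℝ≥0) {κ : ℝ} (hκ : 0 < κ) :
    ∃ A > (0 : ℝ), ∃ δ₀ > 0, ∀ {Ω : Set E} {φ w : E → ℝ} {x : E} {δ : ℝ},
      IsNondegenerateSubsolution L κ Ω φ → IsPositiveHarmonicOn w Ω → 0 < δ → δ ≤ δ₀ →
      x ∈ ball 0 (1 / 2) → δ / 2 < φ x →
      ∃ y ∈ ball 0 1, δ < φ y ∧ w x ≤ A * w y ∧ A⁻¹ * w y ≤ w x := by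
  obtain ⟨ε, hε, hεκ, η, hη, H, hH, hstep⟩ :=
    exists_hasHarnackStep_tiltedPotential (E := E) L hκ
  obtain ⟨N, hN⟩ := exists_nat_gt (1 / η)
  obtain ⟨δ₀, hδ₀, hbounds⟩ := exists_chain_length_bounds N hκ hε
  refine ⟨H ^ N, by positivity, δ₀, hδ₀, fun {Ω φ w x δ} h hw hδ hδδ₀ hx hφx ↦ ?_⟩
  suffices ∃ y ∈ ball 0 1, δ < φ y ∧ Comparable w (H ^ N) x y from
    this.imp fun y ↦ .imp_right <| .imp_right <| .imp_right (inv_mul_le_iff₀ (by positivity)).2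
  have hx' : ‖x‖ < 1 / 2 := mem_ball_zero_iff.1 hx
  have hδε : 0 < δ / ε := by positivity
  obtain ⟨hlen, hsq⟩ := hbounds hδ hδδ₀
  have hlen₀ : 0 ≤ N * (δ / ε) := by positivity
  have hδκ : 2 * δ / κ ≤ δ / ε := by
    rw [div_le_div_iff₀ hκ hε]
    nlinarith
  have he : ‖‖x‖⁻¹ • x‖ ≤ 1 := by
    simpa [norm_smul] using inv_mul_le_one
  have hPx := quarter_le_tiltedPotential hκ hδ hε.le hεκ he hx'.le hφx.le
  have hxΩ : x ∈ Ω := h.mem_of_pos (ball_subset_ball (by norm_num) hx) (by linarith)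
  have hnorm (y : E) (hy : dist y x ≤ N * (δ / ε)) : ‖y‖ + δ / ε < 1 := by
    linarith [norm_sub_norm_le y x, dist_eq_norm y x]
  obtain ⟨y, ⟨hy, hδy⟩, hxy⟩ | ⟨y, hy, hPy, hxy⟩ :=
    HasHarnackStep.iterate hH hδε.le (by positivity) (hw.pos x hxΩ).le (fun y hy hPy ↦
      hstep h hw hδ he (by linarith) (fun hy' ↦ (norm_le_inner_normalize_add_two_mul_sq
        (by linarith) hy' hy).trans (by gcongr)) (hnorm y hy) (hPx.trans hPy)) (le_refl N)
  · exact ⟨y, hy, hδy, hxy⟩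
  · have hNη : δ < N * (η * δ) := by
      rw [← mul_assoc]
      exact lt_mul_of_one_lt_left hδ ((div_lt_iff₀ hη).1 hN)
    refine ⟨y, mem_ball_zero_iff.2 (by linarith [hnorm y hy]), ?_, hxy⟩
    exact lt_of_lt_of_le (by linarith) (hPy.trans (tiltedPotential_le hε.le))

end Chain

/-- Interior Harnack inequality close to the boundary: there are `A > 0` and `δ₀ > 0`,
depending only on `d`, `L`, `κ`, such that for every `δ ∈ (0, δ₀]` and every positive
harmonic `w` on `Ω`, every value of `w` on `B_{1/2} ∩ {φ > δ/2}` is comparable (with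
constant `A`) to a value of `w` on `B₁ ∩ {φ > δ}`; in particular
`sup_{B_{1/2} ∩ {φ>δ/2}} w ≤ A sup_{B₁ ∩ {φ>δ}} w` and
`inf_{B_{1/2} ∩ {φ>δ/2}} w ≥ A⁻¹ inf_{B₁ ∩ {φ>δ}} w`. -/
theorem stmt_9 (d : ℕ) (hd : 0 < d) (L κ : ℝ) (hL : 0 < L) (hκ : 0 < κ) :
    ∃ A > (0:ℝ), ∃ δ₀ > (0:ℝ),
      ∀ (Ω : Set (EuclideanSpace ℝ (Fin d))) (φ : EuclideanSpace ℝ (Fin d) → ℝ),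
      IsOpen Ω → Ω ⊆ ball 0 1 → (0 : EuclideanSpace ℝ (Fin d)) ∈ frontier Ω →
      Continuous φ →
      (∀ x ∈ Ω, 0 < φ x) →
      (∀ x ∈ ball (0 : EuclideanSpace ℝ (Fin d)) 1 \ Ω, φ x = 0) →
      (∀ x ∈ ball (0 : EuclideanSpace ℝ (Fin d)) 1,
        ∀ y ∈ ball (0 : EuclideanSpace ℝ (Fin d)) 1, |φ x - φ y| ≤ L * dist x y) →
      (∀ x ∈ ball (0 : EuclideanSpace ℝ (Fin d)) (1/2),
        κ * infDist x (ball (0 : EuclideanSpace ℝ (Fin d)) 1 \ Ω) ≤ φ x) →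
      (∀ ψ : EuclideanSpace ℝ (Fin d) → ℝ, ContDiff ℝ (⊤ : ℕ∞) ψ → HasCompactSupport ψ →
        tsupport ψ ⊆ ball (0 : EuclideanSpace ℝ (Fin d)) 1 → (∀ x, 0 ≤ ψ x) →
        0 ≤ ∫ x in ball (0 : EuclideanSpace ℝ (Fin d)) 1, φ x *
          (∑ i : Fin d, fderiv ℝ (fun y => fderiv ℝ ψ y (EuclideanSpace.single i 1)) x
            (EuclideanSpace.single i 1))) →
      ∀ δ, 0 < δ → δ ≤ δ₀ →
      ∀ w : EuclideanSpace ℝ (Fin d) → ℝ, (∀ x ∈ Ω, 0 < w x) →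
        (∀ x r, 0 < r → ball x r ⊆ Ω → w x = ⨍ y in ball x r, w y) →
      ∀ x ∈ ball (0 : EuclideanSpace ℝ (Fin d)) (1/2), δ / 2 < φ x →
        ∃ y ∈ ball (0 : EuclideanSpace ℝ (Fin d)) 1, δ < φ y ∧
          w x ≤ A * w y ∧ A⁻¹ * w y ≤ w x := by
  lift L to NNReal using hL.le
  obtain ⟨A, hA, δ₀, hδ₀, hcomp⟩ := stmt_9_general (E := EuclideanSpace ℝ (Fin d)) L hκ
  refine ⟨A, hA, δ₀, hδ₀, fun Ω φ hΩ _ h0 hφ _ hzero hlip hnondeg hsub δ hδ hδδ₀ w hpos hmean x hx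
    hφx ↦ hcomp ?_ ⟨hpos, hmean⟩ hδ hδδ₀ hx hφx⟩
  exact isNondegenerateSubsolution_of_sum_fderiv_fderiv (EuclideanSpace.basisFun (Fin d) ℝ) hΩ h0 hφ
    hzero hlip hnondeg (by simpa only [EuclideanSpace.basisFun_apply] using hsub)
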